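/- Let d ≥ 2 and m ≥ 2, let Π_1, …, Π_m be parallel hyperplanes in E^{d+1} with Π_j above Π_i for j > i, let P_i ⊂ Π_i be finite sets with each 𝒫_i = conv(P_i) d-dimensional with n_i vertices, and let 𝒫 = conv(P_1 ∪ … ∪ P_m). Assume every nonempty proper exposed face of 𝒫 that is contained neither in Π_1 nor in Π_m is a simplex. Let Π̃ be a hyperplane parallel to the Π_i and lying strictly between Π_{m−1} and Π_m. Then for every 1 ≤ k ≤ d, the number of k-faces F of 𝒫 with F ∩ Π̃ ≠ ∅ is at most Σ_A Π_{i=1}^m C(n_i, α_i), where the sum ranges over all vectors A = (α_1, …, α_m) of natural numbers with 0 ≤ α_i ≤ k for all i, α_m ≥ 1, and α_1 + … + α_m = k + 1, and C(n, α) denotes the binomial coefficient. (Lemma 2.3.) -/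

import Mathlib

/-!
A `k`-face `F` of `𝒫 = conv (⋃ P i)` meeting the hyperplane at height `ttil` lies in neither of the
extreme hyperplanes, and it is proper because `𝒫` has dimension `d + 1 > k`
(`adim_convexHull_iUnion_gt`). By assumption `F` is therefore a simplex, so it has exactly `k + 1`
vertices (`ncard_extremePoints_of_isSimplexSet`), and each of them is a vertex of some
`conv (P i)` (`exists_mem_extremePoints_of_isExposed`).

Let `α i` be the number of vertices of `F` lying in `P i`. Then `∑ α i = k + 1`. At least one
vertex is in the top layer, as otherwise `F` would lie below `ttil`; and no layer contains all
`k + 1` vertices, as otherwise `F` would lie in a single hyperplane `Π i`. A face is the convex hull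
of its vertices, so it is determined by the tuple of its vertex sets in the layers, and the number
of tuples with prescribed sizes `α i` is `∏ C(n i, α i)`.
-/

open Set Pointwise RealInnerProductSpace

/-- The dimension of the affine hull of a set. -/
noncomputable def adim {N : ℕ} (F : Set (EuclideanSpace ℝ (Fin N))) : ℕ :=
  Module.finrank ℝ (vectorSpan ℝ F)

/-- A compact convex set is a simplex if its extreme points (vertices) are affinely
independent. -/
def IsSimplexSet {N : ℕ} (F : Set (EuclideanSpace ℝ (Fin N))) : Prop :=
  AffineIndependent ℝ ((↑) : (F.extremePoints ℝ) → EuclideanSpace ℝ (Fin N))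

/-- Every point of a convex hull satisfies any convex constraint on its height that holds at the
generating points. -/
lemma inner_mem_of_mem_convexHull {N : ℕ} {u x : EuclideanSpace ℝ (Fin N)}
    {V : Set (EuclideanSpace ℝ (Fin N))} {I : Set ℝ} (hI : Convex ℝ I)
    (hV : ∀ v ∈ V, ⟪v, u⟫ ∈ I) (hx : x ∈ convexHull ℝ V) : ⟪x, u⟫ ∈ I := by
  have hc : Convex ℝ ((innerₗ (EuclideanSpace ℝ (Fin N)) u) ⁻¹' I) := hI.linear_preimage _
  have h : convexHull ℝ V ⊆ (innerₗ (EuclideanSpace ℝ (Fin N)) u) ⁻¹' I := by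
    refine convexHull_min (fun v hv => ?_) hc
    simpa [real_inner_comm] using hV v hv
  simpa [real_inner_comm] using h hx

lemma vectorSpan_convexHull {N : ℕ} (V : Set (EuclideanSpace ℝ (Fin N))) :
    vectorSpan ℝ (convexHull ℝ V) = vectorSpan ℝ V := by
  rw [← direction_affineSpan, affineSpan_convexHull, direction_affineSpan]

/-- The hull of several layers is strictly higher-dimensional than a layer: it contains a segment
joining two different heights, whose direction is not orthogonal to `u`. -/
lemma adim_convexHull_iUnion_gt {N m : ℕ} {u : EuclideanSpace ℝ (Fin N)} {t : Fin m → ℝ}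
    {P : Fin m → Set (EuclideanSpace ℝ (Fin N))} (hsub : ∀ i, P i ⊆ {x | ⟪x, u⟫ = t i})
    {i j : Fin m} (hij : t i ≠ t j) (hi : (P i).Nonempty) (hj : (P j).Nonempty) :
    adim (convexHull ℝ (P i)) < adim (convexHull ℝ (⋃ i, P i)) := by
  unfold adim
  rw [vectorSpan_convexHull, vectorSpan_convexHull]
  apply Submodule.finrank_lt_finrank_of_lt
  refine lt_of_le_of_ne (vectorSpan_mono ℝ (subset_iUnion P i)) fun h => hij ?_
  obtain ⟨p, hp⟩ := hi
  obtain ⟨q, hq⟩ := hj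
  have hpq : p -ᵥ q ∈ vectorSpan ℝ (P i) := h ▸
    vsub_mem_vectorSpan ℝ (mem_iUnion_of_mem i hp) (mem_iUnion_of_mem j hq)
  have hle : vectorSpan ℝ (P i) ≤ LinearMap.ker (innerₗ (EuclideanSpace ℝ (Fin N)) u) := by
    rw [vectorSpan_def, Submodule.span_le]
    rintro _ ⟨x, hx, y, hy, rfl⟩
    have h1 : ⟪x, u⟫ = t i := hsub i hx
    have h2 : ⟪y, u⟫ = t i := hsub i hy
    rw [real_inner_comm] at h1 h2
    simp [inner_sub_right, h1, h2]
  have h0 := hle hpq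
  have h1 : ⟪p, u⟫ = t i := hsub i hp
  have h2 : ⟪q, u⟫ = t j := hsub j hq
  rw [real_inner_comm] at h1 h2
  simp only [vsub_eq_sub, LinearMap.mem_ker, innerₗ_apply_apply, inner_sub_right, h1, h2] at h0
  linarith

lemma extremePoints_finite_of_isExposed {N : ℕ} {S F : Set (EuclideanSpace ℝ (Fin N))}
    (hS : S.Finite) (hF : IsExposed ℝ (convexHull ℝ S) F) : (F.extremePoints ℝ).Finite :=
  hS.subset (hF.isExtreme.extremePoints_subset_extremePoints.trans extremePoints_convexHull_subset)

/-- A face of a polytope is the convex hull of its vertices. -/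
lemma convexHull_extremePoints_of_isExposed {N : ℕ} {S F : Set (EuclideanSpace ℝ (Fin N))}
    (hS : S.Finite) (hF : IsExposed ℝ (convexHull ℝ S) F) :
    convexHull ℝ (F.extremePoints ℝ) = F := by
  rw [← ((extremePoints_finite_of_isExposed hS hF).isClosed_convexHull ℝ).closure_eq]
  exact closure_convexHull_extremePoints (hF.isCompact (hS.isCompact_convexHull ℝ))
    (hF.convex (convex_convexHull ℝ S))

lemma ncard_extremePoints_of_isSimplexSet {N : ℕ} {S F : Set (EuclideanSpace ℝ (Fin N))}
    (hS : S.Finite) (hF : IsExposed ℝ (convexHull ℝ S) F) (hne : F.Nonempty)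
    (hs : IsSimplexSet F) : (F.extremePoints ℝ).ncard = adim F + 1 := by
  have hfinV := extremePoints_finite_of_isExposed hS hF
  have hhull := convexHull_extremePoints_of_isExposed hS hF
  have hVne : (F.extremePoints ℝ).Nonempty := by
    rw [← hhull] at hne
    exact convexHull_nonempty_iff.1 hne
  have := hfinV.fintype
  have := hVne.to_subtype
  have h := hs.finrank_vectorSpan_add_one
  rw [Subtype.range_coe, ← vectorSpan_convexHull, hhull] at h
  rw [adim, h, ← Nat.card_eq_fintype_card, Nat.card_coe_set_eq]

/-- A vertex of a face of `conv (⋃ P i)` is a vertex of the hull of the layer containing it. -/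
lemma exists_mem_extremePoints_of_isExposed {N m : ℕ} {P : Fin m → Set (EuclideanSpace ℝ (Fin N))}
    {F : Set (EuclideanSpace ℝ (Fin N))} (hF : IsExposed ℝ (convexHull ℝ (⋃ i, P i)) F)
    {v : EuclideanSpace ℝ (Fin N)} (hv : v ∈ F.extremePoints ℝ) :
    ∃ i, v ∈ (convexHull ℝ (P i)).extremePoints ℝ := by
  have hv' := hF.isExtreme.extremePoints_subset_extremePoints hv
  obtain ⟨i, hi⟩ := mem_iUnion.1 (extremePoints_convexHull_subset hv')
  exact ⟨i, inter_extremePoints_subset_extremePoints_of_subset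
    (convexHull_mono (subset_iUnion P i)) ⟨subset_convexHull ℝ _ hi, hv'⟩⟩

theorem stmt3 (d m : ℕ) (hd : 2 ≤ d) (hm : 2 ≤ m)
    (u : EuclideanSpace ℝ (Fin (d + 1))) (hu : ‖u‖ = 1)
    (t : Fin m → ℝ) (ht : StrictMono t)
    (P : Fin m → Set (EuclideanSpace ℝ (Fin (d + 1))))
    (hfin : ∀ i, (P i).Finite)
    (hsub : ∀ i, P i ⊆ {x | ⟪x, u⟫ = t i})
    (hdim : ∀ i, adim (convexHull ℝ (P i)) = d)
    -- every nonempty proper exposed face of 𝒫 contained neither in Π₁ nor in Π_m is a simplex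
    (hsimp : ∀ F : Set (EuclideanSpace ℝ (Fin (d + 1))),
      IsExposed ℝ (convexHull ℝ (⋃ i, P i)) F → F.Nonempty →
      F ≠ convexHull ℝ (⋃ i, P i) →
      ¬ F ⊆ {x | ⟪x, u⟫ = t ⟨0, by omega⟩} →
      ¬ F ⊆ {x | ⟪x, u⟫ = t ⟨m - 1, by omega⟩} →
      IsSimplexSet F)
    (ttil : ℝ) (htt1 : t ⟨m - 2, by omega⟩ < ttil) (htt2 : ttil < t ⟨m - 1, by omega⟩) :
    ∀ k, 1 ≤ k → k ≤ d →
      {F : Set (EuclideanSpace ℝ (Fin (d + 1))) |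
          IsExposed ℝ (convexHull ℝ (⋃ i, P i)) F ∧ F.Nonempty ∧ adim F = k ∧
          (F ∩ {x | ⟪x, u⟫ = ttil}).Nonempty}.ncard ≤
        ∑ A : Fin m → Fin (k + 1),
          if 1 ≤ (A ⟨m - 1, by omega⟩ : ℕ) ∧ (∑ i, (A i : ℕ)) = k + 1 then
            ∏ i, Nat.choose (((convexHull ℝ (P i)).extremePoints ℝ).ncard) (A i)
          else 0 := by
  classical
  intro k hk1 hkd
  set l : Fin m := ⟨m - 1, by omega⟩ with hl
  have hSfin : (⋃ i, P i).Finite := finite_iUnion hfin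
  have hne : ∀ i, (P i).Nonempty := by
    intro i
    by_contra hcon
    have h := hdim i
    rw [not_nonempty_iff_eq_empty.1 hcon] at h
    rw [adim, convexHull_empty, vectorSpan_empty, finrank_bot] at h
    omega
  have hlow : ∀ i, i ≠ l → t i < ttil := by
    intro i hi
    refine lt_of_le_of_lt (ht.monotone ?_) htt1
    have : (i : ℕ) ≠ m - 1 := fun h => hi (Fin.ext h)
    have := i.2
    exact Fin.mk_le_mk.2 (by omega)
  have htne : ∀ i, t i ≠ ttil := by
    intro i
    by_cases hi : i = l
    · rw [hi]
      exact htt2.ne'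
    · exact (hlow i hi).ne
  have hQfin : ∀ i, ((convexHull ℝ (P i)).extremePoints ℝ).Finite := fun i =>
    (hfin i).subset extremePoints_convexHull_subset
  set Q : Fin m → Finset (EuclideanSpace ℝ (Fin (d + 1))) := fun i => (hQfin i).toFinset with hQ
  have hQt : ∀ i, ∀ v ∈ Q i, ⟪v, u⟫ = t i := fun i v hv =>
    hsub i (extremePoints_convexHull_subset ((hQfin i).mem_toFinset.1 hv))
  -- `g F` records the vertices of `F` in each layer.
  set g : Set (EuclideanSpace ℝ (Fin (d + 1))) → Fin m → Finset (EuclideanSpace ℝ (Fin (d + 1))) :=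
    fun F i => (Q i).filter (· ∈ F.extremePoints ℝ) with hg
  have hgV : ∀ F, IsExposed ℝ (convexHull ℝ (⋃ i, P i)) F →
      ∀ v, v ∈ F.extremePoints ℝ ↔ ∃ i, v ∈ g F i := by
    intro F hF v
    constructor
    · intro hv
      obtain ⟨i, hi⟩ := exists_mem_extremePoints_of_isExposed hF hv
      exact ⟨i, Finset.mem_filter.2 ⟨(hQfin i).mem_toFinset.2 hi, hv⟩⟩
    · rintro ⟨i, hi⟩
      exact (Finset.mem_filter.1 hi).2
  set T : Finset (Fin m → Fin (k + 1)) := Finset.univ.filter fun A =>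
    1 ≤ (A l : ℕ) ∧ (∑ i, (A i : ℕ)) = k + 1 with hT
  set B : Finset (Fin m → Finset (EuclideanSpace ℝ (Fin (d + 1)))) :=
    T.biUnion fun A => Fintype.piFinset fun i => (Q i).powersetCard (A i) with hB
  have hmaps : ∀ F ∈ {F : Set (EuclideanSpace ℝ (Fin (d + 1))) |
      IsExposed ℝ (convexHull ℝ (⋃ i, P i)) F ∧ F.Nonempty ∧ adim F = k ∧
      (F ∩ {x | ⟪x, u⟫ = ttil}).Nonempty}, g F ∈ (B : Set _) := by
    rintro F ⟨hF, hFne, hFk, x, hxF, hx⟩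
    replace hx : ⟪x, u⟫ = ttil := hx
    have hproper : F ≠ convexHull ℝ (⋃ i, P i) := by
      rintro rfl
      have h := adim_convexHull_iUnion_gt hsub (i := ⟨0, by omega⟩) (j := l)
        (ht.injective.ne (by simp [hl]; omega)) (hne _) (hne _)
      rw [hdim] at h
      omega
    have hs : IsSimplexSet F := hsimp F hF hFne hproper
      (fun h => htne _ ((h hxF).symm.trans hx)) (fun h => htne _ ((h hxF).symm.trans hx))
    have hcard := ncard_extremePoints_of_isSimplexSet hSfin hF hFne hs
    rw [hFk] at hcard
    have hhull := convexHull_extremePoints_of_isExposed hSfin hF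
    have hxV : x ∈ convexHull ℝ (F.extremePoints ℝ) := hhull.symm ▸ hxF
    -- The layers are disjoint, so the vertex counts of the layers add up to `k + 1`.
    have hU : F.extremePoints ℝ = ((Finset.univ.biUnion (g F) : Finset _) : Set _) := by
      ext v
      simp only [hgV F hF v, Finset.coe_biUnion, Finset.coe_univ, mem_univ, iUnion_true,
        mem_iUnion, Finset.mem_coe]
    have hdisj : ((Finset.univ : Finset (Fin m)) : Set (Fin m)).PairwiseDisjoint (g F) := by
      intro i _ j _ hij
      refine Finset.disjoint_left.2 fun v hvi hvj => hij (ht.injective ?_)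
      rw [← hQt i v (Finset.mem_filter.1 hvi).1, ← hQt j v (Finset.mem_filter.1 hvj).1]
    have hsum : ∑ i, (g F i).card = k + 1 := by
      rw [← hcard, hU, ncard_coe_finset, Finset.card_biUnion hdisj]
    have hle : ∀ i, (g F i).card < k + 1 := by
      intro i
      have h1 : (g F i).card ≤ k + 1 := hsum ▸
        Finset.single_le_sum (f := fun i => (g F i).card) (fun _ _ => Nat.zero_le _)
          (Finset.mem_univ i)
      refine lt_of_le_of_ne h1 fun heq => htne i ?_
      have hsubU : g F i = Finset.univ.biUnion (g F) :=
        Finset.eq_of_subset_of_card_le (Finset.subset_biUnion_of_mem _ (Finset.mem_univ i))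
          (by rw [Finset.card_biUnion hdisj, hsum, heq])
      have h2 : ⟪x, u⟫ ∈ ({t i} : Set ℝ) := by
        refine inner_mem_of_mem_convexHull (convex_singleton _) (fun v hv => ?_) hxV
        rw [hU, ← hsubU] at hv
        exact hQt i v (Finset.mem_filter.1 hv).1
      exact (mem_singleton_iff.1 h2).symm.trans hx
    have hpos : 1 ≤ (g F l).card := by
      rw [Nat.one_le_iff_ne_zero]
      intro h0
      have h2 : ⟪x, u⟫ ∈ Iio ttil := by
        refine inner_mem_of_mem_convexHull (convex_Iio _) (fun v hv => ?_) hxV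
        obtain ⟨i, hi⟩ := (hgV F hF v).1 hv
        rw [hQt i v (Finset.mem_filter.1 hi).1]
        refine hlow i ?_
        rintro rfl
        rw [Finset.card_eq_zero.1 h0] at hi
        simp at hi
      exact (ne_of_lt h2) hx
    refine Finset.mem_coe.2 (Finset.mem_biUnion.2 ⟨fun i => ⟨(g F i).card, hle i⟩, ?_, ?_⟩)
    · exact Finset.mem_filter.2 ⟨Finset.mem_univ _, hpos, hsum⟩
    · exact Fintype.mem_piFinset.2 fun i =>
        Finset.mem_powersetCard.2 ⟨Finset.filter_subset _ _, rfl⟩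
  have hinj : InjOn g {F : Set (EuclideanSpace ℝ (Fin (d + 1))) |
      IsExposed ℝ (convexHull ℝ (⋃ i, P i)) F ∧ F.Nonempty ∧ adim F = k ∧
      (F ∩ {x | ⟪x, u⟫ = ttil}).Nonempty} := by
    rintro F ⟨hF, -⟩ G ⟨hG, -⟩ hFG
    have hV : F.extremePoints ℝ = G.extremePoints ℝ := by
      ext v
      rw [hgV F hF, hgV G hG, hFG]
    rw [← convexHull_extremePoints_of_isExposed hSfin hF, hV,
      convexHull_extremePoints_of_isExposed hSfin hG]
  calc _ ≤ (B : Set (Fin m → Finset (EuclideanSpace ℝ (Fin (d + 1))))).ncard :=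
        ncard_le_ncard_of_injOn g hmaps hinj B.finite_toSet
    _ = B.card := ncard_coe_finset B
    _ ≤ ∑ A ∈ T, (Fintype.piFinset fun i => (Q i).powersetCard (A i)).card :=
        Finset.card_biUnion_le
    _ = _ := by
        rw [hT, Finset.sum_filter]
        refine Finset.sum_congr rfl fun A _ => ?_
        simp only [Fintype.card_piFinset, Finset.card_powersetCard, hQ,
          ncard_eq_toFinset_card _ (hQfin _)]
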